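/- Let a¹, a² : ℝ → ℝ and a³ : ℝ² → ℝ be continuous, and let u : ℝ² → ℝ be twice continuously differentiable and satisfy, for all (t,x), the equation ∂t∂x u + a¹(t)·∂t u + a²(t)·∂x u + a³(t,x)·u = 0. Let R : ℝ → ℝ be continuously differentiable, let g : ℝ → ℝ be differentiable with g(y) ≠ 0 for all y, and let k₁, k₂, k₃ be real constants. Define w(y,z) := u(R(y), k₁z + k₂) / (g(y)·e^{k₃ z}). Then for all (y,z): ∂y∂z w + (a¹(R(y))·k₁ + k₃)·∂y w + (a²(R(y))·R'(y) + g'(y)/g(y))·∂z w + ( a¹(R(y))·k₁·g'(y)/g(y) + k₁·a³(R(y), k₁z+k₂)·R'(y) + a²(R(y))·k₃·R'(y) + k₃·g'(y)/g(y) )·w = 0. -/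

import Mathlib

/-!
Both sides are related by the chain rule: with `G = g(y) e^{k₃ z}`, one has
`w_z = (k₁ u_x - k₃ u) / G`, and differentiating `w` and this formula in `y` expresses
`w_y` and `w_{yz}` through `u_{tx}`, `u_t`, `u_x` and `u` at `(R y, k₁ z + k₂)`. The
transformed expression is then `k₁ R'(y) / G` times the original equation. The only
analytic input is that `u`, being `C²`, has the needed partial derivatives.
-/

/-- The partial derivative `u_x` of a `C²` function is itself differentiable in `t`, which
keeps the mixed derivative from being a junk value. -/
lemma differentiable_deriv_snd (u : ℝ × ℝ → ℝ) (hu : ContDiff ℝ 2 u) (x : ℝ) :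
    Differentiable ℝ (fun t => deriv (fun x' => u (t, x')) x) := by
  have hd : Differentiable ℝ u := hu.differentiable (by norm_num)
  have e : (fun t => deriv (fun x' => u (t, x')) x)
      = fun t => fderiv ℝ u (t, x) (0, 1) := by
    funext t
    have h2 : HasDerivAt (fun x' : ℝ => (t, x')) ((0 : ℝ), (1 : ℝ)) x :=
      (hasDerivAt_const x t).prodMk (hasDerivAt_id x)
    exact ((hd (t, x)).hasFDerivAt.comp_hasDerivAt x h2).deriv
  rw [e]
  have h1 : ContDiff ℝ 1 (fderiv ℝ u) := hu.fderiv_right (by norm_num)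
  have h2 : Differentiable ℝ (fderiv ℝ u) := h1.differentiable (by norm_num)
  fun_prop

/-- transformation of the hyperbolic variant
`u_{tx} + a¹(t)u_t + a²(t)u_x + a³(t,x)u = 0` under the equivalence
transformation `t = R(y)`, `x = k₁z + k₂`, `u = g(y)e^{k₃z} w`. -/
theorem stmt_10
    (a1 a2 : ℝ → ℝ) (a3 : ℝ × ℝ → ℝ)
    (ha1 : Continuous a1) (ha2 : Continuous a2) (ha3 : Continuous a3)
    (u : ℝ × ℝ → ℝ) (hu : ContDiff ℝ 2 u)
    (hueq : ∀ t x : ℝ,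
      deriv (fun t' => deriv (fun x' => u (t', x')) x) t
        + a1 t * deriv (fun t' => u (t', x)) t
        + a2 t * deriv (fun x' => u (t, x')) x
        + a3 (t, x) * u (t, x) = 0)
    (R : ℝ → ℝ) (hR : ContDiff ℝ 1 R)
    (g : ℝ → ℝ) (hg : Differentiable ℝ g) (hgne : ∀ y : ℝ, g y ≠ 0)
    (k1 k2 k3 : ℝ)
    (w : ℝ → ℝ → ℝ)
    (hw : ∀ y z : ℝ, w y z = u (R y, k1 * z + k2) / (g y * Real.exp (k3 * z))) :
    ∀ y z : ℝ,
      deriv (fun y' => deriv (fun z' => w y' z') z) y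
        + (a1 (R y) * k1 + k3) * deriv (fun y' => w y' z) y
        + (a2 (R y) * deriv R y + deriv g y / g y) * deriv (fun z' => w y z') z
        + (a1 (R y) * k1 * (deriv g y / g y)
            + k1 * a3 (R y, k1 * z + k2) * deriv R y
            + a2 (R y) * k3 * deriv R y
            + k3 * (deriv g y / g y)) * w y z
        = 0 := by
  intro y z
  have hd : Differentiable ℝ u := hu.differentiable (by norm_num)
  have hE : ∀ z, Real.exp (k3 * z) ≠ 0 := fun z => Real.exp_ne_zero _
  have hwz : ∀ y z, HasDerivAt (fun z' => w y z')
      ((k1 * deriv (fun x' => u (R y, x')) (k1 * z + k2) - k3 * u (R y, k1 * z + k2))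
        / (g y * Real.exp (k3 * z))) z := by
    intro y z
    have hux : HasDerivAt (fun x' => u (R y, x'))
        (deriv (fun x' => u (R y, x')) (k1 * z + k2)) (k1 * z + k2) := by
      apply DifferentiableAt.hasDerivAt
      fun_prop
    have hl : HasDerivAt (fun z' : ℝ => k1 * z' + k2) k1 z := by
      simpa using ((hasDerivAt_id z).const_mul k1).add_const k2
    have he : HasDerivAt (fun z' : ℝ => g y * Real.exp (k3 * z'))
        (g y * (Real.exp (k3 * z) * k3)) z := by
      have h : HasDerivAt (fun z' : ℝ => k3 * z') k3 z := by
        simpa using (hasDerivAt_id z).const_mul k3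
      exact h.exp.const_mul (g y)
    have hq := (hux.comp z hl).fun_div he (mul_ne_zero (hgne y) (hE z))
    simp only [hw]
    refine hq.congr_deriv ?_
    have h1 := hgne y
    have h2 := hE z
    simp only [Function.comp_apply]
    field_simp
  have hRy : HasDerivAt R (deriv R y) y :=
    (hR.differentiable (by norm_num) y).hasDerivAt
  have hgy : HasDerivAt (fun y' => g y' * Real.exp (k3 * z))
      (deriv g y * Real.exp (k3 * z)) y := (hg y).hasDerivAt.mul_const _
  have hut : HasDerivAt (fun t' => u (t', k1 * z + k2))
      (deriv (fun t' => u (t', k1 * z + k2)) (R y)) (R y) := by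
    apply DifferentiableAt.hasDerivAt
    fun_prop
  have hutx := (differentiable_deriv_snd u hu (k1 * z + k2) (R y)).hasDerivAt
  have hG := mul_ne_zero (hgne y) (hE z)
  have hwy := (hut.comp y hRy).fun_div hgy hG
  have hwyz := (((hutx.comp y hRy).const_mul k1).fun_sub
    ((hut.comp y hRy).const_mul k3)).fun_div hgy hG
  have e1 : (fun y' => deriv (fun z' => w y' z') z) = fun y' =>
      (k1 * deriv (fun x' => u (R y', x')) (k1 * z + k2) - k3 * u (R y', k1 * z + k2))
        / (g y' * Real.exp (k3 * z)) := funext fun y' => (hwz y' z).deriv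
  have e2 : (fun y' => w y' z) =
      fun y' => u (R y', k1 * z + k2) / (g y' * Real.exp (k3 * z)) :=
    funext fun y' => hw y' z
  simp only [Function.comp_apply] at hwy hwyz
  rw [e1, e2, hwyz.deriv, hwy.deriv, (hwz y z).deriv, hw]
  have key := hueq (R y) (k1 * z + k2)
  -- Solving the equation for `u_{tx}` reduces the claim to a rational identity.
  have key' : deriv (fun t' => deriv (fun x' => u (t', x')) (k1 * z + k2)) (R y)
      = -(a1 (R y) * deriv (fun t' => u (t', k1 * z + k2)) (R y)
        + a2 (R y) * deriv (fun x' => u (R y, x')) (k1 * z + k2)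
        + a3 (R y, k1 * z + k2) * u (R y, k1 * z + k2)) := by linarith
  rw [key']
  have h1 := hgne y
  have h2 := hE z
  field_simp
  ring
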